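/- For d ∈ ℝ let m_d = span_ℝ{e₁ + d·e₅, e₂ + d·e₄, e₃} ⊆ g. Then ⁅h, m_d⁆ ⊆ m_d if and only if d = 0. -/

import Mathlib

open Matrix

attribute [local instance 100] LieRing.ofAssociativeRing

/-- The 4×4 block matrix `blk(A, X) = [[A, X], [0, A]]`. -/
noncomputable def blk (A X : Matrix (Fin 2) (Fin 2) ℝ) : Matrix (Fin 4) (Fin 4) ℝ :=
  Matrix.reindexAlgEquiv (R := ℝ) (A := ℝ) finSumFinEquiv (Matrix.fromBlocks A X 0 A)

lemma blk_add (A X B Y : Matrix (Fin 2) (Fin 2) ℝ) :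
    blk A X + blk B Y = blk (A + B) (X + Y) := by
  simp only [blk, ← map_add, Matrix.fromBlocks_add, add_zero]

lemma blk_smul (c : ℝ) (A X : Matrix (Fin 2) (Fin 2) ℝ) :
    c • blk A X = blk (c • A) (c • X) := by
  rw [blk, blk, ← _root_.map_smul, Matrix.fromBlocks_smul, smul_zero]

lemma blk_neg (A X : Matrix (Fin 2) (Fin 2) ℝ) : -blk A X = blk (-A) (-X) := by
  rw [← neg_one_smul ℝ (blk A X), blk_smul, neg_one_smul, neg_one_smul]

lemma blk_sub (A X B Y : Matrix (Fin 2) (Fin 2) ℝ) :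
    blk A X - blk B Y = blk (A - B) (X - Y) := by
  rw [sub_eq_add_neg, blk_neg, blk_add, ← sub_eq_add_neg, ← sub_eq_add_neg]

lemma blk_zero : blk 0 0 = 0 := by
  simp [blk, Matrix.fromBlocks_zero]

lemma blk_mul (A X B Y : Matrix (Fin 2) (Fin 2) ℝ) :
    blk A X * blk B Y = blk (A * B) (A * Y + X * B) := by
  rw [blk, blk, blk, ← _root_.map_mul, Matrix.fromBlocks_multiply]
  simp only [mul_zero, zero_mul, add_zero, zero_add]

/-- `g`: the Lie subalgebra of `gl₄(ℝ)` consisting of the block matrices `blk(A,X)` with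
`A`, `X` traceless. -/
noncomputable def gLie : LieSubalgebra ℝ (Matrix (Fin 4) (Fin 4) ℝ) where
  carrier := {M | ∃ A X : Matrix (Fin 2) (Fin 2) ℝ, A.trace = 0 ∧ X.trace = 0 ∧ M = blk A X}
  add_mem' := by
    rintro M N ⟨A, X, hA, hX, rfl⟩ ⟨B, Y, hB, hY, rfl⟩
    exact ⟨A + B, X + Y, by simp [hA, hB], by simp [hX, hY], blk_add A X B Y⟩
  zero_mem' := ⟨0, 0, Matrix.trace_zero (Fin 2) ℝ, Matrix.trace_zero (Fin 2) ℝ, blk_zero.symm⟩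
  smul_mem' := by
    rintro c M ⟨A, X, hA, hX, rfl⟩
    exact ⟨c • A, c • X, by simp [hA], by simp [hX], blk_smul c A X⟩
  lie_mem' := by
    rintro M N ⟨A, X, hA, hX, rfl⟩ ⟨B, Y, hB, hY, rfl⟩
    refine ⟨A * B - B * A, (A * Y + X * B) - (B * X + Y * A), ?_, ?_, ?_⟩
    · simp [Matrix.trace_sub, Matrix.trace_mul_comm A B]
    · simp only [Matrix.trace_sub, Matrix.trace_add]
      rw [Matrix.trace_mul_comm A Y, Matrix.trace_mul_comm X B]
      ring
    · show blk A X * blk B Y - blk B Y * blk A X = _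
      rw [blk_mul, blk_mul, blk_sub]

/-- The matrix `H`. -/
def matH : Matrix (Fin 2) (Fin 2) ℝ := !![1, 0; 0, -1]

/-- The matrix `T`. -/
def matT : Matrix (Fin 2) (Fin 2) ℝ := !![0, 1; 1, 0]

/-- The matrix `U`. -/
def matU : Matrix (Fin 2) (Fin 2) ℝ := !![0, 1; -1, 0]

/-- `e₁ = blk(0, −U)`. -/
noncomputable def e₁ : Matrix (Fin 4) (Fin 4) ℝ := blk 0 (-matU)

/-- `e₂ = blk(H, 0)`. -/
noncomputable def e₂ : Matrix (Fin 4) (Fin 4) ℝ := blk matH 0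

/-- `e₃ = blk(T, 0)`. -/
noncomputable def e₃ : Matrix (Fin 4) (Fin 4) ℝ := blk matT 0

/-- `e₄ = blk(U, 0)`. -/
noncomputable def e₄ : Matrix (Fin 4) (Fin 4) ℝ := blk matU 0

/-- `e₅ = blk(0, −H)`. -/
noncomputable def e₅ : Matrix (Fin 4) (Fin 4) ℝ := blk 0 (-matH)

/-- `e₆ = blk(0, T)`. -/
noncomputable def e₆ : Matrix (Fin 4) (Fin 4) ℝ := blk 0 matT

/-- `h = span_ℝ {e₄, e₅, e₆}`. -/
noncomputable def hSub : Submodule ℝ (Matrix (Fin 4) (Fin 4) ℝ) :=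
  Submodule.span ℝ {e₄, e₅, e₆}

/-- For `d ∈ ℝ`, the subspace `m_d = span_ℝ {e₁ + d·e₅, e₂ + d·e₄, e₃}` of `g`. -/
noncomputable def mSub (d : ℝ) : Submodule ℝ (Matrix (Fin 4) (Fin 4) ℝ) :=
  Submodule.span ℝ {e₁ + d • e₅, e₂ + d • e₄, e₃}

/-!
Since `⁅e₅, e₃⁆ = 2 e₁`, an `h`-stable `m_d` contains `e₁`. Among the generators of `m_d` only
`e₁ + d·e₅ = blk(0, -U - d·H)` has a nonzero upper right block `X`, so the equation
`X₀₀ = d·X₀₁` holds on `m_d`; for `e₁` it reads `0 = -d`. Conversely, the brackets of `e₄, e₅, e₆`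
with `e₁, e₂, e₃` are all multiples of `e₁, e₂, e₃`, which span `m_0`.
-/

lemma lie_mem_of_mem_span {R L M : Type*} [CommRing R] [LieRing L] [LieAlgebra R L]
    [AddCommGroup M] [Module R M] [LieRingModule L M] [LieModule R L M]
    {s : Set L} {t : Set M} {p : Submodule R M} (h : ∀ x ∈ s, ∀ y ∈ t, ⁅x, y⁆ ∈ p)
    {x : L} {y : M} (hx : x ∈ Submodule.span R s) (hy : y ∈ Submodule.span R t) : ⁅x, y⁆ ∈ p :=
  LinearMap.BilinMap.apply_apply_mem_of_mem_span p s t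
    (LieModule.toEnd R L M : L →ₗ[R] Module.End R M) h x y hx hy

lemma lie_blk_blk (A X B Y : Matrix (Fin 2) (Fin 2) ℝ) :
    ⁅blk A X, blk B Y⁆ = blk ⁅A, B⁆ (⁅A, Y⁆ + ⁅X, B⁆) := by
  simp only [Ring.lie_def, blk_mul, blk_sub]
  congr 1
  abel

lemma blk_inj {A X B Y : Matrix (Fin 2) (Fin 2) ℝ} : blk A X = blk B Y ↔ A = B ∧ X = Y := by
  rw [blk, blk, EmbeddingLike.apply_eq_iff_eq, fromBlocks_inj]
  tauto

lemma lie_matU_matH : ⁅matU, matH⁆ = (-2 : ℝ) • matT := by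
  ext i j
  fin_cases i <;> fin_cases j <;> norm_num [Ring.lie_def, matU, matH, matT]

lemma lie_matU_matT : ⁅matU, matT⁆ = (2 : ℝ) • matH := by
  ext i j
  fin_cases i <;> fin_cases j <;> norm_num [Ring.lie_def, matU, matH, matT]

lemma lie_matH_matT : ⁅matH, matT⁆ = (2 : ℝ) • matU := by
  ext i j
  fin_cases i <;> fin_cases j <;> norm_num [Ring.lie_def, matU, matH, matT]

lemma lie_e₄_e₁ : ⁅e₄, e₁⁆ = 0 := by
  simp [e₄, e₁, lie_blk_blk, blk_zero]

lemma lie_e₄_e₂ : ⁅e₄, e₂⁆ = (-2 : ℝ) • e₃ := by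
  simp [e₄, e₂, e₃, lie_blk_blk, lie_matU_matH, blk_smul, blk_neg]

lemma lie_e₄_e₃ : ⁅e₄, e₃⁆ = (2 : ℝ) • e₂ := by
  simp [e₄, e₃, e₂, lie_blk_blk, lie_matU_matT, blk_smul]

lemma lie_e₅_e₁ : ⁅e₅, e₁⁆ = 0 := by
  simp [e₅, e₁, lie_blk_blk, blk_zero]

lemma lie_e₅_e₂ : ⁅e₅, e₂⁆ = 0 := by
  simp [e₅, e₂, lie_blk_blk, blk_zero]

lemma lie_e₅_e₃ : ⁅e₅, e₃⁆ = (2 : ℝ) • e₁ := by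
  simp [e₅, e₃, e₁, lie_blk_blk, lie_matH_matT, blk_smul]

lemma lie_e₆_e₁ : ⁅e₆, e₁⁆ = 0 := by
  simp [e₆, e₁, lie_blk_blk, blk_zero]

lemma lie_e₆_e₂ : ⁅e₆, e₂⁆ = (2 : ℝ) • e₁ := by
  simp [e₆, e₂, e₁, lie_blk_blk, ← lie_skew matT matH, lie_matH_matT, blk_smul]

lemma lie_e₆_e₃ : ⁅e₆, e₃⁆ = 0 := by
  simp [e₆, e₃, lie_blk_blk, blk_zero]

lemma mSub_zero : mSub 0 = Submodule.span ℝ {e₁, e₂, e₃} := by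
  simp only [mSub, zero_smul, add_zero]

lemma lie_mem_mSub_zero {x y : Matrix (Fin 4) (Fin 4) ℝ} (hx : x ∈ hSub) (hy : y ∈ mSub 0) :
    ⁅x, y⁆ ∈ mSub 0 := by
  rw [mSub_zero] at hy ⊢
  refine lie_mem_of_mem_span ?_ hx hy
  have he₁ : e₁ ∈ Submodule.span ℝ {e₁, e₂, e₃} := Submodule.mem_span_of_mem (by simp)
  have he₂ : e₂ ∈ Submodule.span ℝ {e₁, e₂, e₃} := Submodule.mem_span_of_mem (by simp)
  have he₃ : e₃ ∈ Submodule.span ℝ {e₁, e₂, e₃} := Submodule.mem_span_of_mem (by simp)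
  rintro _ (rfl | rfl | rfl) _ (rfl | rfl | rfl)
  · exact lie_e₄_e₁ ▸ Submodule.zero_mem _
  · exact lie_e₄_e₂ ▸ Submodule.smul_mem _ _ he₃
  · exact lie_e₄_e₃ ▸ Submodule.smul_mem _ _ he₂
  · exact lie_e₅_e₁ ▸ Submodule.zero_mem _
  · exact lie_e₅_e₂ ▸ Submodule.zero_mem _
  · exact lie_e₅_e₃ ▸ Submodule.smul_mem _ _ he₁
  · exact lie_e₆_e₁ ▸ Submodule.zero_mem _
  · exact lie_e₆_e₂ ▸ Submodule.smul_mem _ _ he₁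
  · exact lie_e₆_e₃ ▸ Submodule.zero_mem _

lemma apply_zero_zero_eq_mul_of_blk_mem_mSub {d : ℝ} {A X : Matrix (Fin 2) (Fin 2) ℝ}
    (h : blk A X ∈ mSub d) : X 0 0 = d * X 0 1 := by
  obtain ⟨a, b, c, h⟩ := Submodule.mem_span_triple.mp h
  simp only [e₁, e₂, e₃, e₄, e₅, blk_smul, blk_add] at h
  obtain ⟨-, rfl⟩ := blk_inj.mp h
  simp [matH, matU, mul_comm]

lemma eq_zero_of_e₁_mem_mSub {d : ℝ} (h : e₁ ∈ mSub d) : d = 0 := by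
  simpa [matU] using apply_zero_zero_eq_mul_of_blk_mem_mSub h

/-- `⁅h, m_d⁆ ⊆ m_d` if and only if `d = 0`. -/
theorem stmt_18 (d : ℝ) :
    (∀ x ∈ hSub, ∀ y ∈ mSub d, ⁅x, y⁆ ∈ mSub d) ↔ d = 0 := by
  constructor
  · intro h
    have he₅ : e₅ ∈ hSub := Submodule.mem_span_of_mem (by simp)
    have he₃ : e₃ ∈ mSub d := Submodule.mem_span_of_mem (by simp)
    have two_smul_e₁_mem : (2 : ℝ) • e₁ ∈ mSub d := lie_e₅_e₃ ▸ h e₅ he₅ e₃ he₃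
    exact eq_zero_of_e₁_mem_mSub ((Submodule.smul_mem_iff _ two_ne_zero).mp two_smul_e₁_mem)
  · rintro rfl x hx y hy
    exact lie_mem_mSub_zero hx hy
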